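/- arXiv:2305.09173 — 2 statements merged into one kernel-verified Lean document; each statement's English description precedes it below -/
import Mathlib

section
/- For the network ẋ = -Lx over a directed graph G = (V,E), a subset S ⊆ V is a topological cluster if and only if S is a maximal set satisfying: (C1) the induced subgraph G[S] has at least one directed spanning tree, and (C2) either no node of S, or exactly one node of S which is a root of G[S], has incoming edges from V \ S. -/
open Filter Topology

/-- `S` converges to a common value for every choice of positive edge weights
and every solution of `ẋᵢ = Σⱼ aᵢⱼ (xⱼ - xᵢ)`. -/
def ConvergesTogether {V : Type*} [Fintype V] (E : V → V → Prop) (S : Set V) : Prop :=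
  ∀ A : Matrix V V ℝ,
    (∀ i j, E j i → 0 < A i j) → (∀ i j, ¬ E j i → A i j = 0) →
    ∀ x : ℝ → V → ℝ,
      (∀ (i : V) (t : ℝ),
        HasDerivAt (fun s => x s i) (∑ j, A i j * (x t j - x t i)) t) →
      ∃ c : ℝ, ∀ i ∈ S, Tendsto (fun t => x t i) atTop (𝓝 c)

/-- Conditions (C1) and (C2): the induced subgraph `G[S]` has a directed spanning
tree (a root reaching all of `S` within `S`), and either no node of `S`, or
exactly one node of `S` which is a root of `G[S]`, has incoming edges from
outside `S`. -/
def SatC1C2 {V : Type*} (E : V → V → Prop) (S : Set V) : Prop :=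
  (∃ r ∈ S, ∀ j ∈ S,
    Relation.ReflTransGen (fun a b => a ∈ S ∧ b ∈ S ∧ E a b) r j) ∧
  ((∀ i ∈ S, ∀ j ∉ S, ¬ E j i) ∨
    ∃ r ∈ S,
      (∀ j ∈ S, Relation.ReflTransGen (fun a b => a ∈ S ∧ b ∈ S ∧ E a b) r j) ∧
      (∃ j ∉ S, E j r) ∧
      ∀ i ∈ S, (∃ j ∉ S, E j i) → i = r)

/-- Every node of `V` either agrees with all its in-neighbours, or has an in-neighbour with a
strictly smaller value and one with a strictly larger value. These are exactly the equilibria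
of the consensus dynamics for some choice of positive weights. -/
def IsBalanced {V : Type*} (E : V → V → Prop) (x : V → ℝ) : Prop :=
  ∀ i, (∀ j, E j i → x j = x i) ∨ (∃ j, E j i ∧ x j < x i) ∧ ∃ k, E k i ∧ x i < x k

section Graph

variable {V : Type*} {E : V → V → Prop}

theorem satC1C2_iff {S : Set V} :
    SatC1C2 E S ↔ ∃ r ∈ S,
      (∀ j ∈ S, Relation.ReflTransGen (fun a b => a ∈ S ∧ b ∈ S ∧ E a b) r j) ∧
      ∀ i ∈ S, i ≠ r → ∀ j, E j i → j ∈ S := by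
  constructor
  · rintro ⟨⟨r, hr, hroot⟩, h | ⟨q, hq, hqroot, -, h⟩⟩
    · exact ⟨r, hr, hroot, fun i hi _ j hji => by_contra fun hj => h i hi j hj hji⟩
    · exact ⟨q, hq, hqroot, fun i hi hiq j hji =>
        by_contra fun hj => hiq (h i hi ⟨j, hj, hji⟩)⟩
  · rintro ⟨r, hr, hroot, h⟩
    refine ⟨⟨r, hr, hroot⟩, ?_⟩
    by_cases hout : ∃ j ∉ S, E j r
    · refine Or.inr ⟨r, hr, hroot, hout, fun i hi ⟨j, hj, hji⟩ => ?_⟩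
      by_contra hir
      exact hj (h i hi hir j hji)
    · refine Or.inl fun i hi j hj hji => ?_
      by_cases hir : i = r
      · exact hout ⟨j, hj, hir ▸ hji⟩
      · exact hj (h i hi hir j hji)

theorem IsBalanced.neg {x : V → ℝ} (hx : IsBalanced E x) : IsBalanced E (-x) := by
  intro i
  rcases hx i with h | ⟨⟨j, hj, hlt⟩, k, hk, hgt⟩
  · exact Or.inl fun j hj => by simp [h j hj]
  · exact Or.inr ⟨⟨k, hk, by simpa using hgt⟩, j, hj, by simpa using hlt⟩

/-- Maximum principle. -/
theorem IsBalanced.le_root [Finite V] {x : V → ℝ} (hx : IsBalanced E x) {S : Set V} {r : V}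
    (hr : r ∈ S)
    (hroot : ∀ j ∈ S, Relation.ReflTransGen (fun a b => a ∈ S ∧ b ∈ S ∧ E a b) r j)
    (hin : ∀ i ∈ S, i ≠ r → ∀ j, E j i → j ∈ S) {i : V} (hi : i ∈ S) : x i ≤ x r := by
  obtain ⟨m, hmS, hm⟩ := S.toFinite.exists_maximalFor x S ⟨r, hr⟩
  have hmax : ∀ k ∈ S, x k ≤ x m := fun k hk => by
    rcases le_total (x k) (x m) with h | h
    · exact h
    · exact hm hk h
  have back : ∀ k, Relation.ReflTransGen (fun a b => a ∈ S ∧ b ∈ S ∧ E a b) r k →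
      x k = x m → x r = x m := by
    intro k hk
    induction hk with
    | refl => exact id
    | @tail b c _ hbc ih =>
      intro hc
      by_cases hcr : c = r
      · rwa [← hcr]
      · rcases hx c with h | ⟨-, k, hk, hlt⟩
        · exact ih ((h b hbc.2.2).trans hc)
        · exact absurd (hmax k (hin c hbc.2.1 hcr k hk)) (by linarith)
  rw [back m (hroot m hmS) rfl]
  exact hmax i hi

theorem IsBalanced.eq_root [Finite V] {x : V → ℝ} (hx : IsBalanced E x) {S : Set V} {r : V}
    (hr : r ∈ S)
    (hroot : ∀ j ∈ S, Relation.ReflTransGen (fun a b => a ∈ S ∧ b ∈ S ∧ E a b) r j)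
    (hin : ∀ i ∈ S, i ≠ r → ∀ j, E j i → j ∈ S) {i : V} (hi : i ∈ S) : x i = x r :=
  le_antisymm (hx.le_root hr hroot hin hi) (by simpa using hx.neg.le_root hr hroot hin hi)

variable [Fintype V]

theorem isBalanced_of_sum_eq_zero {A : Matrix V V ℝ} (hpos : ∀ i j, E j i → 0 < A i j)
    (hzero : ∀ i j, ¬ E j i → A i j = 0) {x : V → ℝ}
    (hx : ∀ i, ∑ j, A i j * (x j - x i) = 0) : IsBalanced E x := by
  intro i
  by_cases h : ∀ j, E j i → x j = x i
  · exact Or.inl h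
  push Not at h
  obtain ⟨k, hk, hne⟩ := h
  have edge : ∀ j, A i j * (x j - x i) ≠ 0 → E j i := fun j hj => by
    by_contra hE
    simp [hzero i j hE] at hj
  have hk0 : A i k * (x k - x i) ≠ 0 := mul_ne_zero (hpos i k hk).ne' (sub_ne_zero.2 hne)
  refine Or.inr ⟨?_, ?_⟩
  · obtain ⟨j, -, hj⟩ := Finset.exists_pos_of_sum_zero_of_exists_nonzero
      (s := Finset.univ) (fun j => -(A i j * (x j - x i))) (by simp [hx i])
      ⟨k, Finset.mem_univ _, neg_ne_zero.2 hk0⟩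
    have hE := edge j (by linarith : A i j * (x j - x i) < 0).ne
    exact ⟨j, hE, by nlinarith [hpos i j hE]⟩
  · obtain ⟨j, -, hj⟩ := Finset.exists_pos_of_sum_zero_of_exists_nonzero
      (s := Finset.univ) (fun j => A i j * (x j - x i)) (hx i) ⟨k, Finset.mem_univ _, hk0⟩
    have hE := edge j hj.ne'
    exact ⟨j, hE, by nlinarith [hpos i j hE]⟩

open Classical in
theorem IsBalanced.exists_weights {x : V → ℝ} (hx : IsBalanced E x) :
    ∃ A : Matrix V V ℝ, (∀ i j, E j i → 0 < A i j) ∧ (∀ i j, ¬ E j i → A i j = 0) ∧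
      ∀ i, ∑ j, A i j * (x j - x i) = 0 := by
  let up : V → ℝ := fun i => ∑ j, if E j i then max (x j - x i) 0 else 0
  let down : V → ℝ := fun i => ∑ j, if E j i then max (x i - x j) 0 else 0
  have hup : ∀ i k, E k i → x i < x k → 0 < up i := fun i k hk hlt =>
    Finset.sum_pos' (fun j _ => by split_ifs <;> simp) ⟨k, Finset.mem_univ _, by simp [hk, hlt]⟩
  have hdown : ∀ i k, E k i → x k < x i → 0 < down i := fun i k hk hlt =>
    Finset.sum_pos' (fun j _ => by split_ifs <;> simp) ⟨k, Finset.mem_univ _, by simp [hk, hlt]⟩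
  refine ⟨fun i j => if E j i then
    (if x i < x j then down i else if x j < x i then up i else 1) else 0, ?_, ?_, ?_⟩
  · intro i j hji
    rcases hx i with h | ⟨⟨k, hk, hlt⟩, l, hl, hgt⟩
    · simp [hji, h j hji]
    · simp only [hji, if_true]
      split_ifs
      exacts [hdown i k hk hlt, hup i l hl hgt, one_pos]
  · intro i j hji
    simp [hji]
  · intro i
    have key : ∀ j, (if E j i then
        (if x i < x j then down i else if x j < x i then up i else 1) else 0) * (x j - x i) =
        down i * (if E j i then max (x j - x i) 0 else 0) -
          up i * (if E j i then max (x i - x j) 0 else 0) := by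
      intro j
      by_cases hE : E j i
      · rcases lt_trichotomy (x i) (x j) with h | h | h
        · simp [hE, h, max_eq_left (sub_pos.2 h).le, max_eq_right (sub_neg.2 h).le]
        · simp [hE, h]
        · simp only [hE, if_true, h, h.not_gt, if_false, max_eq_left (sub_pos.2 h).le,
            max_eq_right (sub_neg.2 h).le]
          ring
      · simp [hE]
    simp only [key, Finset.sum_sub_distrib, ← Finset.mul_sum]
    exact sub_eq_zero.2 (mul_comm _ _)

theorem ConvergesTogether.eq_of_isBalanced {S : Set V} (hS : ConvergesTogether E S) {x : V → ℝ}
    (hx : IsBalanced E x) {i j : V} (hi : i ∈ S) (hj : j ∈ S) : x i = x j := by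
  obtain ⟨A, hpos, hzero, hA⟩ := hx.exists_weights
  obtain ⟨c, hc⟩ := hS A hpos hzero (fun _ => x) fun i t => by
    rw [hA i]
    exact hasDerivAt_const t (x i)
  exact (tendsto_nhds_unique tendsto_const_nhds (hc i hi)).trans
    (tendsto_nhds_unique tendsto_const_nhds (hc j hj)).symm

open Classical in
/-- Two nodes without a common ancestor are separated by a balanced function. -/
theorem exists_isBalanced_ne {a b : V}
    (hab : ∀ r, Relation.ReflTransGen E r a → ¬ Relation.ReflTransGen E r b) :
    ∃ y : V → ℝ, IsBalanced E y ∧ y a ≠ y b := by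
  let A : Matrix V V ℝ := fun i j => if E j i then 1 else 0
  let d : V → ℝ := fun i => 1 + ∑ j, A i j
  let P : (V → ℝ) → V → ℝ := fun y i => (y i + ∑ j, A i j * y j) / d i
  have hA : ∀ i j, 0 ≤ A i j := fun i j => by simp only [A]; split_ifs <;> simp
  have hd : ∀ i, 0 < d i := fun i => add_pos_of_pos_of_nonneg one_pos
    (Finset.sum_nonneg fun j _ => hA i j)
  have hPmono : Monotone P := fun y z hyz i => by
    have : ∑ j, A i j * y j ≤ ∑ j, A i j * z j :=
      Finset.sum_le_sum fun j _ => mul_le_mul_of_nonneg_left (hyz j) (hA i j)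
    exact div_le_div_of_nonneg_right (add_le_add (hyz i) this) (hd i).le
  have hPcont : Continuous P := by
    refine continuous_pi fun i => ?_
    simp only [P]
    fun_prop
  let y₀ : V → ℝ := fun i => if Relation.ReflTransGen E i b then 1 else 0
  have hstep : y₀ ≤ P y₀ := fun i => by
    by_cases hi : Relation.ReflTransGen E i b
    · have : ∑ j, A i j * y₀ j = ∑ j, A i j := Finset.sum_congr rfl fun j _ => by
        by_cases hE : E j i
        · simp [y₀, Relation.ReflTransGen.head hE hi]
        · simp [A, hE]
      have hyi : y₀ i = 1 := by simp [y₀, hi]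
      simp only [P, this, hyi]
      exact (div_self (hd i).ne').ge
    · have hyi : y₀ i = 0 := by simp [y₀, hi]
      rw [hyi]
      refine div_nonneg (add_nonneg hyi.ge (Finset.sum_nonneg fun j _ =>
        mul_nonneg (hA i j) ?_)) (hd i).le
      simp only [y₀]
      split_ifs <;> simp
  have hmono : Monotone fun n => P^[n] y₀ := hPmono.monotone_iterate_of_le_map hstep
  have hle : ∀ n, P^[n] y₀ ≤ 1 := fun n => by
    induction n with
    | zero =>
      intro i
      simp only [Function.iterate_zero, id, y₀, Pi.one_apply]
      split_ifs <;> simp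
    | succ n ih =>
      rw [Function.iterate_succ_apply']
      refine (hPmono ih).trans fun i => ?_
      simp only [P, Pi.one_apply, mul_one]
      exact (div_self (hd i).ne').le
  have hanc : ∀ n i, Relation.ReflTransGen E i a → P^[n] y₀ i = 0 := fun n => by
    induction n with
    | zero => intro i hi; simp [y₀, hab i hi]
    | succ n ih =>
      intro i hi
      have : ∑ j, A i j * P^[n] y₀ j = 0 := Finset.sum_eq_zero fun j _ => by
        by_cases hE : E j i
        · simp [ih j (Relation.ReflTransGen.head hE hi)]
        · simp [A, hE]
      rw [Function.iterate_succ_apply']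
      simp [P, this, ih i hi]
  have hlim : Tendsto (fun n => P^[n] y₀) atTop (𝓝 fun i => ⨆ n, P^[n] y₀ i) :=
    tendsto_pi_nhds.2 fun i => tendsto_atTop_ciSup (fun m n hmn => hmono hmn i)
      ⟨1, by rintro _ ⟨n, rfl⟩; exact hle n i⟩
  set y : V → ℝ := fun i => ⨆ n, P^[n] y₀ i
  have hfix : P y = y := isFixedPt_of_tendsto_iterate hlim hPcont.continuousAt
  refine ⟨y, isBalanced_of_sum_eq_zero (A := A) (fun i j h => by simp [A, h])
    (fun i j h => by simp [A, h]) fun i => ?_, ?_⟩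
  · have := congrFun hfix i
    simp only [P] at this
    rw [div_eq_iff (hd i).ne'] at this
    simp only [mul_sub, Finset.sum_sub_distrib, ← Finset.sum_mul]
    simp only [d] at this
    linarith
  · have ha : y a = 0 := by simp [y, hanc _ a .refl]
    have hb : 1 ≤ y b := by
      refine ge_of_tendsto' (tendsto_pi_nhds.1 hlim b) fun n => ?_
      have := hmono (Nat.zero_le n) b
      simpa [y₀, Relation.ReflTransGen.refl] using this
    linarith

/-- A finite set of nodes in which every two elements have a common ancestor has a root. -/
theorem exists_root_of_common_ancestor {T : Set V} (hT : T.Nonempty)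
    (h : ∀ a ∈ T, ∀ b ∈ T, ∃ r ∈ T, Relation.ReflTransGen E r a ∧ Relation.ReflTransGen E r b) :
    ∃ r ∈ T, ∀ j ∈ T, Relation.ReflTransGen E r j := by
  obtain ⟨r, hr, hmax⟩ :=
    T.toFinite.exists_maximalFor (fun r => {j | Relation.ReflTransGen E r j}) T hT
  refine ⟨r, hr, fun j hj => ?_⟩
  obtain ⟨q, hq, hqr, hqj⟩ := h r hr j hj
  exact hmax hq (fun k hk => hqr.trans hk) hqj

theorem exists_pos_perturbation (x y : V → ℝ) :
    ∃ ε > 0, ∀ i j, x i < x j → x i + ε * y i < x j + ε * y j := by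
  have h : ∀ᶠ ε in 𝓝 (0 : ℝ), ∀ i j, x i < x j → x i + ε * y i < x j + ε * y j := by
    refine eventually_all.2 fun i => eventually_all.2 fun j => ?_
    by_cases hij : x i < x j
    · have hi : Continuous fun ε : ℝ => x i + ε * y i := by fun_prop
      have hj : Continuous fun ε : ℝ => x j + ε * y j := by fun_prop
      filter_upwards [hi.continuousAt.eventually_lt hj.continuousAt (by simpa using hij)]
        with ε hε _ using hε
    · simp [hij]
  obtain ⟨ε, hε, hpos⟩ :=
    ((h.filter_mono nhdsWithin_le_nhds).and (self_mem_nhdsWithin (s := Set.Ioi (0 : ℝ)))).exists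
  exact ⟨ε, hpos, hε⟩

/-- The level sets of a balanced function taking as many distinct values as possible
satisfy (C1) and (C2). -/
theorem IsBalanced.satC1C2_of_maximal {x : V → ℝ} (hx : IsBalanced E x)
    (hmax : ∀ z, IsBalanced E z → (∀ i j, z i = z j → x i = x j) →
      ∀ i j, x i = x j → z i = z j) (s : V) :
    SatC1C2 E {i | x i = x s} := by
  let F : V → V → Prop := fun a b => E a b ∧ ∀ j, E j b → x j = x b
  have hlevel : ∀ {p q}, Relation.ReflTransGen F p q → x p = x q := fun {p q} hpq => by
    induction hpq with
    | refl => rfl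
    | tail _ hbc ih => exact ih.trans (hbc.2 _ hbc.1)
  have hcommon : ∀ a b, x a = x b →
      ∃ r, Relation.ReflTransGen F r a ∧ Relation.ReflTransGen F r b := by
    intro a b hxab
    by_contra! hab
    obtain ⟨y, hy, hne⟩ := exists_isBalanced_ne hab
    obtain ⟨ε, hε, hlt⟩ := exists_pos_perturbation x y
    have hz : IsBalanced E fun i => x i + ε * y i := by
      intro i
      by_cases hi : ∀ j, E j i → x j = x i
      · rcases hy i with h | ⟨⟨j, hj, hjlt⟩, k, hk, hklt⟩
        · exact Or.inl fun j hj => by simp only [hi j hj, h j ⟨hj, hi⟩]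
        · refine Or.inr ⟨⟨j, hj.1, ?_⟩, k, hk.1, ?_⟩
          · simp only [hi j hj.1]
            gcongr
          · simp only [hi k hk.1]
            gcongr
      · rcases hx i with h | ⟨⟨j, hj, hjlt⟩, k, hk, hklt⟩
        · exact absurd h hi
        · exact Or.inr ⟨⟨j, hj, hlt _ _ hjlt⟩, k, hk, hlt _ _ hklt⟩
    have hfiner : ∀ i j, x i + ε * y i = x j + ε * y j → x i = x j := fun i j hij => by
      rcases lt_trichotomy (x i) (x j) with h | h | h
      · exact absurd hij (hlt i j h).ne
      · exact h
      · exact absurd hij (hlt j i h).ne'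
    have := hmax _ hz hfiner a b hxab
    rw [hxab] at this
    exact hne (mul_left_cancel₀ hε.ne' (add_left_cancel this))
  obtain ⟨r, hr, hroot⟩ := exists_root_of_common_ancestor (E := F) (T := {i | x i = x s})
    ⟨s, rfl⟩ fun a ha b hb => by
      obtain ⟨r, hra, hrb⟩ := hcommon a b (ha.trans hb.symm)
      exact ⟨r, (hlevel hra).trans ha, hra, hrb⟩
  refine satC1C2_iff.2 ⟨r, hr, fun j hj => ?_, fun i hi hir j hji => ?_⟩
  · have hrj := hroot j hj
    clear hj
    induction hrj with
    | refl => exact .refl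
    | tail hrb hbc ih =>
      have hb := (hlevel hrb).symm.trans hr
      exact ih.tail ⟨hb, (hbc.2 _ hbc.1).symm.trans hb, hbc.1⟩
  · rcases (hroot i hi).cases_tail with h | ⟨b, -, hb⟩
    · exact absurd h hir
    · exact (hb.2 j hji).trans hi

theorem ConvergesTogether.exists_satC1C2 {S : Set V} (hS : S.Nonempty)
    (h : ConvergesTogether E S) : ∃ T, S ⊆ T ∧ SatC1C2 E T := by
  obtain ⟨s, hs⟩ := hS
  obtain ⟨x, hx, hmax⟩ := Set.Finite.exists_maximalFor'
    (fun x : V → ℝ => {p : V × V | x p.1 ≠ x p.2}) {x | IsBalanced E x}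
    (Set.toFinite _) ⟨0, fun i => Or.inl fun j _ => rfl⟩
  refine ⟨_, fun i hi => h.eq_of_isBalanced hx hi hs, hx.satC1C2_of_maximal ?_ s⟩
  intro z hz hfiner i j hij
  by_contra hne
  exact hmax hz (fun p hp hzp => hp (hfiner _ _ hzp)) (a := (i, j)) hne hij

end Graph

section Dynamics

/-- A stable scalar filter driven by a convergent input converges. -/
theorem tendsto_of_hasDerivAt_sub_smul {F : Type*} [NormedAddCommGroup F] [NormedSpace ℂ F]
    {f f' : ℝ → F} {μ : ℂ} {l : F} (hμ : μ.re < 0) (hf : ∀ t, HasDerivAt f (f' t) t)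
    (hl : Tendsto (fun t => f' t - μ • f t) atTop (𝓝 l)) :
    Tendsto f atTop (𝓝 (-(μ⁻¹ • l))) := by
  have hμ0 : μ ≠ 0 := by rintro rfl; simp at hμ
  set a := -μ.re with ha
  have ha0 : 0 < a := by linarith
  let φ : ℝ → F := fun t => Complex.exp (-μ * t) • (f t + μ⁻¹ • l)
  let φ' : ℝ → F := fun t => Complex.exp (-μ * t) • (f' t - μ • f t - l)
  have hφ : ∀ t, HasDerivAt φ (φ' t) t := fun t => by
    have h1 : HasDerivAt (fun s : ℝ => Complex.exp (-μ * s))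
        (Complex.exp (-μ * t) * (-μ * 1)) t :=
      ((Complex.ofRealCLM.hasDerivAt (x := t)).const_mul (-μ)).cexp
    refine (h1.smul ((hf t).add_const (μ⁻¹ • l))).congr_deriv ?_
    simp only [φ', smul_sub, smul_add, smul_smul, mul_one]
    rw [show Complex.exp (-μ * t) * -μ * μ⁻¹ = -Complex.exp (-μ * t) by field_simp]
    module
  have hexp : ∀ t : ℝ, ‖Complex.exp (-μ * t)‖ = Real.exp (a * t) := fun t => by
    simp [Complex.norm_exp, ha]
  have hnorm : ∀ t, ‖f t + μ⁻¹ • l‖ = Real.exp (-(a * t)) * ‖φ t‖ := fun t => by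
    simp only [φ, norm_smul, hexp]
    rw [← mul_assoc, ← Real.exp_add]
    simp
  rw [tendsto_iff_norm_sub_tendsto_zero]
  simp only [sub_neg_eq_add]
  rw [Metric.tendsto_atTop]
  intro ε hε
  obtain ⟨T, hT⟩ := (Metric.tendsto_atTop.1 hl) (a * (ε / 2)) (by positivity)
  have hbound : ∀ t, T ≤ t → ‖φ t‖ ≤ ‖φ T‖ + ε / 2 * (Real.exp (a * t) - Real.exp (a * T)) := by
    intro t ht
    refine image_norm_le_of_norm_deriv_right_le_deriv_boundary (a := T) (b := t) (f' := φ')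
      (B := fun s => ‖φ T‖ + ε / 2 * (Real.exp (a * s) - Real.exp (a * T)))
      (B' := fun s => a * (ε / 2) * Real.exp (a * s))
      (fun s _ => (hφ s).continuousAt.continuousWithinAt) (fun s _ => (hφ s).hasDerivWithinAt)
      (by simp) (fun s => ?_) (fun s hs => ?_) ⟨ht, le_rfl⟩
    · have := ((((hasDerivAt_id s).const_mul a).exp.sub_const (Real.exp (a * T))).const_mul
        (ε / 2)).const_add ‖φ T‖
      refine this.congr_deriv ?_
      simp only [id]
      ring
    · have := (hT s hs.1).le
      rw [dist_eq_norm] at this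
      simp only [φ', norm_smul, hexp]
      rw [mul_comm]
      gcongr
  have hdecay : Tendsto (fun t => Real.exp (-(a * t)) * ‖φ T‖) atTop (𝓝 (0 * ‖φ T‖)) :=
    (Real.tendsto_exp_neg_atTop_nhds_zero.comp
      (tendsto_id.const_mul_atTop ha0)).mul_const _
  rw [zero_mul] at hdecay
  obtain ⟨N, hN⟩ := eventually_atTop.1 (hdecay.eventually_lt_const (half_pos hε))
  refine ⟨max T N, fun t ht => ?_⟩
  have h1 := hbound t ((le_max_left _ _).trans ht)
  have h2 := hN t ((le_max_right _ _).trans ht)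
  rw [Real.dist_eq, sub_zero, abs_of_nonneg (norm_nonneg _), hnorm]
  have hmul : Real.exp (-(a * t)) * Real.exp (a * t) = 1 := by rw [← Real.exp_add]; simp
  calc Real.exp (-(a * t)) * ‖φ t‖
      ≤ Real.exp (-(a * t)) *
          (‖φ T‖ + ε / 2 * (Real.exp (a * t) - Real.exp (a * T))) := by gcongr
    _ = Real.exp (-(a * t)) * ‖φ T‖ + ε / 2 * (Real.exp (-(a * t)) * Real.exp (a * t))
          - ε / 2 * (Real.exp (-(a * t)) * Real.exp (a * T)) := by ring
    _ < ε := by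
      rw [hmul]
      have : 0 < ε / 2 * (Real.exp (-(a * t)) * Real.exp (a * T)) := by positivity
      linarith

variable {F : Type*} [NormedAddCommGroup F] [NormedSpace ℂ F]

theorem re_neg_of_hasEigenvalue {B : Module.End ℂ F} {c : ℝ}
    (hB : ∀ v, ‖B v + (c : ℂ) • v‖ ≤ c * ‖v‖) {μ : ℂ} (hμ : B.HasEigenvalue μ) (h0 : μ ≠ 0) :
    μ.re < 0 := by
  obtain ⟨v, hv⟩ := hμ.exists_hasEigenvector
  have h := hB v
  rw [hv.apply_eq_smul, ← add_smul, norm_smul] at h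
  have hle : ‖μ + c‖ ≤ c := le_of_mul_le_mul_right h (norm_pos_iff.2 hv.2)
  have hsq : ‖μ + c‖ ^ 2 ≤ c ^ 2 := pow_le_pow_left₀ (norm_nonneg _) hle 2
  rw [← Complex.normSq_eq_norm_sq, Complex.normSq_apply] at hsq
  simp only [Complex.add_re, Complex.ofReal_re, Complex.add_im, Complex.ofReal_im,
    add_zero] at hsq
  have hc : 0 ≤ c := (norm_nonneg _).trans hle
  by_contra! hre
  have hre0 : μ.re = 0 := by nlinarith [mul_nonneg hre hc, mul_self_nonneg μ.im]
  have him0 : μ.im = 0 := by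
    rw [hre0] at hsq
    nlinarith
  exact h0 (Complex.ext hre0 him0)

theorem apply_eq_zero_of_apply_apply_eq_zero {B : Module.End ℂ F} {c : ℝ} (hc : 0 < c)
    (hB : ∀ v, ‖B v + (c : ℂ) • v‖ ≤ c * ‖v‖) {v : F} (hv : B (B v) = 0) : B v = 0 := by
  let C : Module.End ℂ F := B + (c : ℂ) • 1
  have hC : ∀ n : ℕ, ‖(C ^ n) v‖ ≤ c ^ n * ‖v‖ := fun n => by
    induction n with
    | zero => simp
    | succ n ih =>
      rw [pow_succ', Module.End.mul_apply, pow_succ', mul_assoc]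
      exact (hB _).trans (by gcongr)
  have hpow : ∀ n : ℕ, (c : ℂ) • (C ^ n) v =
      (c : ℂ) ^ (n + 1) • v + ((n : ℂ) * (c : ℂ) ^ n) • B v := fun n => by
    induction n with
    | zero => simp
    | succ n ih =>
      rw [pow_succ' C, Module.End.mul_apply, ← map_smul, ih]
      simp only [C, LinearMap.add_apply, LinearMap.smul_apply, Module.End.one_apply, map_add,
        map_smul, hv, Nat.cast_add, Nat.cast_one]
      module
  have hbound : ∀ n : ℕ, n * ‖B v‖ ≤ 2 * c * ‖v‖ := fun n => by
    have h1 : ((n : ℂ) * (c : ℂ) ^ n) • B v = (c : ℂ) • (C ^ n) v - (c : ℂ) ^ (n + 1) • v := by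
      rw [hpow n]; abel
    have h2 := norm_sub_le ((c : ℂ) • (C ^ n) v) ((c : ℂ) ^ (n + 1) • v)
    rw [← h1] at h2
    simp only [norm_smul, norm_mul, norm_pow, Complex.norm_real, Complex.norm_natCast,
      Real.norm_eq_abs, abs_of_pos hc] at h2
    have h3 := mul_le_mul_of_nonneg_left (hC n) hc.le
    refine le_of_mul_le_mul_left (?_ : c ^ n * _ ≤ c ^ n * _) (pow_pos hc n)
    calc c ^ n * (n * ‖B v‖) = n * c ^ n * ‖B v‖ := by ring
      _ ≤ c * (c ^ n * ‖v‖) + c ^ (n + 1) * ‖v‖ := by linarith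
      _ = c ^ n * (2 * c * ‖v‖) := by ring
  by_contra hne
  obtain ⟨n, hn⟩ := exists_nat_gt (2 * c * ‖v‖ / ‖B v‖)
  rw [div_lt_iff₀ (norm_pos_iff.2 hne)] at hn
  exact (hbound n).not_gt hn

theorem apply_eq_zero_of_pow_apply_eq_zero {B : Module.End ℂ F} {c : ℝ} (hc : 0 < c)
    (hB : ∀ v, ‖B v + (c : ℂ) • v‖ ≤ c * ‖v‖) {v : F} {m : ℕ} (hv : (B ^ m) v = 0) :
    B v = 0 := by
  induction m with
  | zero => simp_all
  | succ m ih =>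
    cases m with
    | zero => simpa using hv
    | succ m =>
      refine ih ?_
      rw [pow_succ', Module.End.mul_apply] at hv ⊢
      rw [pow_succ', Module.End.mul_apply] at hv
      exact apply_eq_zero_of_apply_apply_eq_zero hc hB hv

variable [FiniteDimensional ℂ F]

theorem hasDerivAt_apply_end (L : Module.End ℂ F) {f : ℝ → F} {f' : F} {t : ℝ}
    (hf : HasDerivAt f f' t) : HasDerivAt (fun s => L (f s)) (L f') t :=
  ((LinearMap.toContinuousLinearMap L).restrictScalars ℝ).hasFDerivAt.comp_hasDerivAt t hf

open Polynomial in
theorem exists_tendsto_of_aeval_tendsto {B : Module.End ℂ F} (q : ℂ[X]) (hq0 : q ≠ 0)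
    (hroots : ∀ μ, q.IsRoot μ → μ.re < 0) {f : ℝ → F} (hf : ∀ t, HasDerivAt f (B (f t)) t)
    {l : F} (hBl : B l = 0) (hl : Tendsto (fun t => aeval B q (f t)) atTop (𝓝 l)) :
    ∃ l, B l = 0 ∧ Tendsto f atTop (𝓝 l) := by
  induction hn : q.natDegree generalizing q f l with
  | zero =>
    rw [eq_C_of_natDegree_eq_zero hn] at hl hq0
    have hc : q.coeff 0 ≠ 0 := by simpa using hq0
    simp only [aeval_C, Module.algebraMap_end_apply] at hl
    refine ⟨(q.coeff 0)⁻¹ • l, by simp [hBl], ?_⟩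
    simpa [smul_smul, inv_mul_cancel₀ hc] using hl.const_smul (q.coeff 0)⁻¹
  | succ n ih =>
    obtain ⟨μ, hμ⟩ := IsAlgClosed.exists_root q
      (fun h => by simp [natDegree_eq_of_degree_eq_some (n := 0) h] at hn)
    obtain ⟨p, rfl⟩ := dvd_iff_isRoot.2 hμ
    have hp0 : p ≠ 0 := right_ne_zero_of_mul hq0
    have hdeg : p.natDegree = n := by
      rw [natDegree_mul (X_sub_C_ne_zero μ) hp0, natDegree_X_sub_C] at hn
      omega
    let D : Module.End ℂ F := B - μ • 1
    have hcomm : ∀ v, D (B v) = B (D v) := fun v => by simp [D]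
    obtain ⟨k, hBk, hk⟩ := ih p hp0 (fun ν hν => hroots ν (root_mul_left_of_isRoot _ hν))
      (f := fun t => D (f t)) (fun t => by
        have := hasDerivAt_apply_end D (hf t)
        rwa [hcomm] at this) hBl (by
        refine hl.congr fun t => ?_
        rw [mul_comm, map_mul, Module.End.mul_apply]
        simp [D, Module.algebraMap_end_apply]) hdeg
    exact ⟨-(μ⁻¹ • k), by simp [hBk], tendsto_of_hasDerivAt_sub_smul (hroots μ hμ) hf
      (by simpa [D] using hk)⟩

open Polynomial in
theorem exists_tendsto_of_norm_add_smul_le {B : Module.End ℂ F} {c : ℝ} (hc : 0 < c)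
    (hB : ∀ v, ‖B v + (c : ℂ) • v‖ ≤ c * ‖v‖) {f : ℝ → F}
    (hf : ∀ t, HasDerivAt f (B (f t)) t) : ∃ l, B l = 0 ∧ Tendsto f atTop (𝓝 l) := by
  have hp0 : minpoly ℂ B ≠ 0 := minpoly.ne_zero (Algebra.IsIntegral.isIntegral B)
  obtain ⟨q, hq, hndvd⟩ := exists_eq_pow_rootMultiplicity_mul_and_not_dvd (minpoly ℂ B) hp0 0
  have hq0 : q ≠ 0 := by rintro rfl; simp at hndvd
  have hroots : ∀ μ, q.IsRoot μ → μ.re < 0 := fun μ hμ => by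
    refine re_neg_of_hasEigenvalue hB (Module.End.hasEigenvalue_of_isRoot ?_) ?_
    · rw [hq]
      exact root_mul_left_of_isRoot _ hμ
    · rintro rfl
      exact hndvd (dvd_iff_isRoot.2 hμ)
  have hker : ∀ v, B (aeval B q v) = 0 := fun v => by
    refine apply_eq_zero_of_pow_apply_eq_zero hc hB (m := rootMultiplicity 0 (minpoly ℂ B)) ?_
    have h := minpoly.aeval ℂ B
    rw [hq] at h
    simpa using LinearMap.congr_fun h v
  have hcommute : ∀ v, aeval B q (B v) = 0 := fun v => by
    rw [← hker v, ← Module.End.mul_apply, ← Module.End.mul_apply]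
    have := congrArg (aeval B) (mul_comm q X)
    rw [map_mul, map_mul, aeval_X] at this
    rw [this]
  have hconst : ∀ t, aeval B q (f t) = aeval B q (f 0) := fun t => by
    refine is_const_of_deriv_eq_zero
      (fun s => (hasDerivAt_apply_end (aeval B q) (hf s)).differentiableAt) (fun s => ?_) t 0
    rw [(hasDerivAt_apply_end (aeval B q) (hf s)).deriv, hcommute]
  exact exists_tendsto_of_aeval_tendsto q hq0 hroots hf (hker (f 0))
    (by simp only [hconst]; exact tendsto_const_nhds)

/-- Solutions of the consensus dynamics with nonnegative weights converge to an equilibrium. -/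
theorem exists_tendsto_equilibrium {V : Type*} [Fintype V] {A : Matrix V V ℝ}
    (hA : ∀ i j, 0 ≤ A i j) {x : ℝ → V → ℝ}
    (hx : ∀ (i : V) (t : ℝ),
      HasDerivAt (fun s => x s i) (∑ j, A i j * (x t j - x t i)) t) :
    ∃ l : V → ℝ, (∀ i, ∑ j, A i j * (l j - l i) = 0) ∧
      ∀ i, Tendsto (fun t => x t i) atTop (𝓝 (l i)) := by
  let B : Module.End ℂ (V → ℂ) :=
    { toFun := fun v i => ∑ j, (A i j : ℂ) * (v j - v i)
      map_add' := fun v w => by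
        ext i
        simp only [Pi.add_apply, ← Finset.sum_add_distrib]
        exact Finset.sum_congr rfl fun j _ => by ring
      map_smul' := fun a v => by
        ext i
        simp only [Pi.smul_apply, smul_eq_mul, RingHom.id_apply, Finset.mul_sum]
        exact Finset.sum_congr rfl fun j _ => by ring }
  let d : V → ℝ := fun i => ∑ j, A i j
  have hd : ∀ i, 0 ≤ d i := fun i => Finset.sum_nonneg fun j _ => hA i j
  let c : ℝ := 1 + ∑ i, d i
  have hdc : ∀ i, d i ≤ c := fun i =>
    (Finset.single_le_sum (fun j _ => hd j) (Finset.mem_univ i)).trans (by simp [c])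
  have hc : 0 < c := add_pos_of_pos_of_nonneg one_pos (Finset.sum_nonneg fun i _ => hd i)
  have hB : ∀ v, ‖B v + (c : ℂ) • v‖ ≤ c * ‖v‖ := fun v => by
    refine (pi_norm_le_iff_of_nonneg (by positivity)).2 fun i => ?_
    have heq : (B v + (c : ℂ) • v) i =
        ∑ j, (A i j : ℂ) * v j + ((c - d i : ℝ) : ℂ) * v i := by
      simp only [B, d, Pi.add_apply, Pi.smul_apply, LinearMap.coe_mk, AddHom.coe_mk, mul_sub,
        Finset.sum_sub_distrib, ← Finset.sum_mul, smul_eq_mul, Complex.ofReal_sub,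
        Complex.ofReal_sum]
      ring
    rw [heq]
    calc ‖∑ j, (A i j : ℂ) * v j + ((c - d i : ℝ) : ℂ) * v i‖
        ≤ ∑ j, A i j * ‖v‖ + (c - d i) * ‖v‖ := by
          refine (norm_add_le _ _).trans (add_le_add ((norm_sum_le _ _).trans
            (Finset.sum_le_sum fun j _ => ?_)) ?_)
          · rw [norm_mul, Complex.norm_real, Real.norm_of_nonneg (hA i j)]
            exact mul_le_mul_of_nonneg_left (norm_le_pi_norm v j) (hA i j)
          · rw [norm_mul, Complex.norm_real, Real.norm_of_nonneg (sub_nonneg.2 (hdc i))]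
            exact mul_le_mul_of_nonneg_left (norm_le_pi_norm v i) (sub_nonneg.2 (hdc i))
      _ = c * ‖v‖ := by
          rw [← Finset.sum_mul]
          ring
  obtain ⟨l, hl0, hl⟩ := exists_tendsto_of_norm_add_smul_le hc hB
    (f := fun t i => (x t i : ℂ)) fun t => hasDerivAt_pi.2 fun i => by
      refine (hx i t).ofReal_comp.congr_deriv ?_
      simp [B]
  refine ⟨fun i => (l i).re, fun i => ?_, fun i => ?_⟩
  · have := congrArg Complex.re (congrFun hl0 i)
    simpa [B] using this
  · exact (Complex.continuous_re.tendsto _).comp (tendsto_pi_nhds.1 hl i)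

end Dynamics

theorem SatC1C2.convergesTogether {V : Type*} [Fintype V] {E : V → V → Prop} {S : Set V}
    (hS : SatC1C2 E S) : ConvergesTogether E S := by
  intro A hpos hzero x hx
  obtain ⟨r, hr, hroot, hin⟩ := satC1C2_iff.1 hS
  obtain ⟨l, hl0, hl⟩ := exists_tendsto_equilibrium (fun i j => by
    by_cases h : E j i
    exacts [(hpos i j h).le, (hzero i j h).ge]) hx
  refine ⟨l r, fun i hi => ?_⟩
  rw [← (isBalanced_of_sum_eq_zero hpos hzero hl0).eq_root hr hroot hin hi]
  exact hl i

/-- A nonempty `S` is a topological cluster (a maximal set of nodes converging to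
an identical value for all positive edge weights and initial conditions) iff `S`
is a maximal set satisfying (C1) and (C2). -/
theorem stmt12 {V : Type*} [Fintype V] (E : V → V → Prop) (S : Set V)
    (hS : S.Nonempty) :
    (ConvergesTogether E S ∧
        ∀ S' : Set V, S ⊆ S' → ConvergesTogether E S' → S' = S) ↔
      (SatC1C2 E S ∧ ∀ S' : Set V, S ⊆ S' → SatC1C2 E S' → S' = S) := by
  constructor
  · rintro ⟨hconv, hmax⟩
    obtain ⟨T, hST, hT⟩ := hconv.exists_satC1C2 hS
    have hTS := hmax T hST hT.convergesTogether
    exact ⟨hTS ▸ hT, fun S' hSS' hS' => hmax S' hSS' hS'.convergesTogether⟩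
  · rintro ⟨hsat, hmax⟩
    refine ⟨hsat.convergesTogether, fun S' hSS' hS' => ?_⟩
    obtain ⟨T, hST, hT⟩ := hS'.exists_satC1C2 (hS.mono hSS')
    have hTS := hmax T (hSS'.trans hST) hT
    exact (hST.trans hTS.le).antisymm hSS'
end

section
/- Under the dynamics ẋ = -Lx over any weighted directed graph with positive edge weights, the state x(t) converges to a finite limit as t → ∞ for every initial condition (i.e., the matrix exponential e^{-Lt} converges as t → ∞). -/
open Filter Topology

/-- `x` is a trajectory of the consensus dynamics `ẋᵢ = Σⱼ aᵢⱼ (xⱼ - xᵢ)`. -/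
def IsConsensusFlow {V : Type*} [Fintype V] (A : Matrix V V ℝ) (x : ℝ → V → ℝ) : Prop :=
  ∀ (i : V) (t : ℝ), HasDerivAt (fun s => x s i) (∑ j, A i j * (x t j - x t i)) t

/-- The squared negative part is differentiable. -/
lemma hasDerivAt_min_zero_sq (a : ℝ) :
    HasDerivAt (fun s : ℝ => (min s 0) ^ 2) (2 * min a 0) a := by
  rcases lt_trichotomy a 0 with h | rfl | h
  · rw [min_eq_left h.le]
    have h1 : HasDerivAt (fun s : ℝ => s ^ 2) (2 * a) a := by
      simpa using hasDerivAt_pow 2 a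
    refine h1.congr_of_eventuallyEq ?_
    filter_upwards [Iio_mem_nhds h] with s hs
    rw [min_eq_left (le_of_lt hs)]
  · rw [hasDerivAt_iff_isLittleO_nhds_zero]
    have h2 : (fun h : ℝ => h ^ 2) =o[𝓝 0] fun h => h := by
      simpa using Asymptotics.isLittleO_pow_pow (𝕜 := ℝ) (m := 1) (n := 2) (by norm_num)
    refine Asymptotics.IsBigO.trans_isLittleO (Asymptotics.IsBigO.of_bound 1 ?_) h2
    refine Eventually.of_forall fun s => ?_
    rcases le_total s 0 with hs | hs <;> simp [hs]
  · rw [min_eq_right h.le, mul_zero]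
    refine (hasDerivAt_const a (0 : ℝ)).congr_of_eventuallyEq ?_
    filter_upwards [Ioi_mem_nhds h] with s hs
    simp [min_eq_right (Set.mem_Ioi.1 hs).le]

namespace IsConsensusFlow

variable {V : Type*} [Fintype V] {A : Matrix V V ℝ} {x : ℝ → V → ℝ}

lemma neg (hx : IsConsensusFlow A x) : IsConsensusFlow A (fun t i => -x t i) := by
  intro i t
  refine (hx i t).neg.congr_deriv ?_
  rw [← Finset.sum_neg_distrib]
  exact Finset.sum_congr rfl fun j _ => by ring

lemma const_sub (hx : IsConsensusFlow A x) (D : ℝ) :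
    IsConsensusFlow A (fun t i => D - x t i) := by
  intro i t
  refine ((hx i t).const_sub D).congr_deriv ?_
  rw [← Finset.sum_neg_distrib]
  exact Finset.sum_congr rfl fun j _ => by ring

lemma sub_equilibrium (hx : IsConsensusFlow A x) {c : V → ℝ}
    (hc : ∀ i, ∑ j, A i j * (c j - c i) = 0) :
    IsConsensusFlow A (fun t i => x t i - c i) := by
  intro i t
  refine ((hx i t).sub_const (c i)).congr_deriv ?_
  rw [← sub_zero (∑ j, A i j * (x t j - x t i)), ← hc i, ← Finset.sum_sub_distrib]
  exact Finset.sum_congr rfl fun j _ => by ring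

lemma velocity (hx : IsConsensusFlow A x) :
    IsConsensusFlow A (fun t i => ∑ j, A i j * (x t j - x t i)) := by
  intro i t
  exact HasDerivAt.fun_sum fun j _ => ((hx j t).sub (hx i t)).const_mul (A i j)

/-- The nonnegative orthant is forward invariant. -/
lemma nonneg (hA : ∀ i j, 0 ≤ A i j) (hx : IsConsensusFlow A x) {t₀ t : ℝ} (ht : t₀ ≤ t)
    (h₀ : ∀ i, 0 ≤ x t₀ i) (i : V) : 0 ≤ x t i := by
  set E : ℝ → ℝ := fun t => ∑ i, (min (x t i) 0) ^ 2 with hE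
  set K : ℝ := 2 * ∑ i, ∑ j, A i j with hK
  have hle (s : ℝ) (j : V) : (min (x s j) 0) ^ 2 ≤ E s :=
    Finset.single_le_sum (f := fun j => (min (x s j) 0) ^ 2)
      (fun _ _ => sq_nonneg _) (Finset.mem_univ j)
  have hE' (s : ℝ) : HasDerivAt E
      (∑ i, 2 * min (x s i) 0 * ∑ j, A i j * (x s j - x s i)) s :=
    HasDerivAt.fun_sum fun i _ =>
      HasDerivAt.comp (h₂ := fun r : ℝ => (min r 0) ^ 2) s (hasDerivAt_min_zero_sq (x s i)) (hx i s)
  have hbound (s : ℝ) : ∑ i, 2 * min (x s i) 0 * ∑ j, A i j * (x s j - x s i) ≤ K * E s := by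
    have hs := hle s
    generalize E s = e at hs ⊢
    rw [hK, Finset.mul_sum, Finset.sum_mul]
    refine Finset.sum_le_sum fun i _ => ?_
    rw [Finset.mul_sum, Finset.mul_sum, Finset.sum_mul]
    refine Finset.sum_le_sum fun j _ => ?_
    have key : min (x s i) 0 * (x s j - x s i) ≤ e := by
      refine le_trans ?_ (hs j)
      rcases le_total (x s i) 0 with h | h <;> rcases le_total (x s j) 0 with h' | h' <;>
        simp only [min_eq_left, min_eq_right, h, h'] <;>
        nlinarith [sq_nonneg (x s i - x s j), sq_nonneg (x s i), sq_nonneg (x s j)]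
    nlinarith [mul_le_mul_of_nonneg_left key (hA i j)]
  have hd (s : ℝ) : HasDerivAt (fun s => Real.exp (-K * s) * E s) _ s :=
    (((hasDerivAt_id s).const_mul (-K)).exp).mul (hE' s)
  have hanti : Antitone fun s => Real.exp (-K * s) * E s := by
    refine antitone_of_hasDerivAt_nonpos hd fun s => ?_
    have := mul_le_mul_of_nonneg_left (hbound s) (Real.exp_pos (-K * s)).le
    simp only [id, Pi.zero_apply]
    linarith
  have hE₀ : E t₀ = 0 := Finset.sum_eq_zero fun i _ => by simp [min_eq_right (h₀ i)]
  have h1 : Real.exp (-K * t) * E t ≤ 0 := by simpa [hE₀] using hanti ht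
  have h2 : E t ≤ 0 := nonpos_of_mul_nonpos_right h1 (Real.exp_pos _)
  have h3 : min (x t i) 0 = 0 :=
    pow_eq_zero_iff (two_ne_zero) |>.1 (le_antisymm ((hle t i).trans h2) (sq_nonneg _))
  exact min_eq_right_iff.1 h3

lemma le_of_le (hA : ∀ i j, 0 ≤ A i j) (hx : IsConsensusFlow A x) {t₀ t D : ℝ} (ht : t₀ ≤ t)
    (h₀ : ∀ i, x t₀ i ≤ D) (i : V) : x t i ≤ D :=
  sub_nonneg.1 ((hx.const_sub D).nonneg hA ht (fun i => sub_nonneg.2 (h₀ i)) i)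

/-- The sup norm is nonincreasing along trajectories. -/
lemma antitone_norm (hA : ∀ i j, 0 ≤ A i j) (hx : IsConsensusFlow A x) :
    Antitone fun t => ‖x t‖ := by
  intro s t hst
  refine (pi_norm_le_iff_of_nonneg (norm_nonneg _)).2 fun i => ?_
  have h (i : V) : |x s i| ≤ ‖x s‖ := norm_le_pi_norm (x s) i
  rw [Real.norm_eq_abs, abs_le]
  constructor
  · exact neg_le.1 (hx.neg.le_of_le hA hst (fun i => (neg_le_abs _).trans (h i)) i)
  · exact hx.le_of_le hA hst (fun i => (le_abs_self _).trans (h i)) i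

/-- A component that ends close to an upper bound of all components was close to that bound
before. -/
lemma sub_le_exp_mul (hA : ∀ i j, 0 ≤ A i j) (hx : IsConsensusFlow A x) {r s D : ℝ}
    (hrs : r ≤ s) (hD : ∀ t ∈ Set.Icc r s, ∀ j, x t j ≤ D) (i : V) :
    D - x r i ≤ Real.exp ((∑ i, ∑ j, A i j) * (s - r)) * (D - x s i) := by
  set C : ℝ := ∑ i, ∑ j, A i j
  have hC : ∑ j, A i j ≤ C := Finset.single_le_sum (f := fun i => ∑ j, A i j)
    (fun i _ => Finset.sum_nonneg fun j _ => hA i j) (Finset.mem_univ i)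
  have hd (t : ℝ) : HasDerivAt (fun t => Real.exp (C * t) * (D - x t i)) _ t :=
    (((hasDerivAt_id t).const_mul C).exp).mul ((hx i t).const_sub D)
  have hmono : MonotoneOn (fun t => Real.exp (C * t) * (D - x t i)) (Set.Icc r s) := by
    refine monotoneOn_of_hasDerivWithinAt_nonneg (convex_Icc r s)
      (fun t _ => (hd t).continuousAt.continuousWithinAt)
      (fun t _ => (hd t).hasDerivWithinAt) fun t ht => ?_
    have ht' := interior_subset ht
    have h1 : ∑ j, A i j * (x t j - x t i) ≤ C * (D - x t i) := by
      calc ∑ j, A i j * (x t j - x t i) ≤ ∑ j, A i j * (D - x t i) :=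
            Finset.sum_le_sum fun j _ => mul_le_mul_of_nonneg_left
              (sub_le_sub_right (hD t ht' j) _) (hA i j)
        _ = (∑ j, A i j) * (D - x t i) := by rw [Finset.sum_mul]
        _ ≤ _ := mul_le_mul_of_nonneg_right hC (sub_nonneg.2 (hD t ht' i))
    have h2 := mul_le_mul_of_nonneg_left h1 (Real.exp_pos (C * t)).le
    simp only [id]
    linarith
  have h := hmono (Set.left_mem_Icc.2 hrs) (Set.right_mem_Icc.2 hrs) hrs
  have he : Real.exp (C * s) = Real.exp (C * r) * Real.exp (C * (s - r)) := by
    rw [← Real.exp_add]; ring_nf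
  simp only [he, mul_assoc] at h
  exact le_of_mul_le_mul_left h (Real.exp_pos _)

/-- If all velocities stay below `d + η` on `[T, T + S]` and the velocity of `i` ends above `d`,
then `i` travels at least `S * d / 2`, provided `η` is small. -/
lemma mul_half_le_sub (hA : ∀ i j, 0 ≤ A i j) (hx : IsConsensusFlow A x) {T S d η : ℝ}
    (hS : 0 ≤ S) (hη : 0 ≤ η) (hηd : Real.exp ((∑ i, ∑ j, A i j) * S) * η ≤ d / 2)
    (hD : ∀ t ∈ Set.Icc T (T + S), ∀ i, ∑ j, A i j * (x t j - x t i) ≤ d + η) {i : V}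
    (hi : d ≤ ∑ j, A i j * (x (T + S) j - x (T + S) i)) :
    S * (d / 2) ≤ x (T + S) i - x T i := by
  have hC : 0 ≤ ∑ i, ∑ j, A i j :=
    Finset.sum_nonneg fun i _ => Finset.sum_nonneg fun j _ => hA i j
  have hv : ∀ t ∈ Set.Icc T (T + S), d / 2 ≤ ∑ j, A i j * (x t j - x t i) := by
    intro t ht
    have h1 := hx.velocity.sub_le_exp_mul hA ht.2
      (fun r hr => hD r ⟨ht.1.trans hr.1, hr.2⟩) i
    have h2 : Real.exp ((∑ i, ∑ j, A i j) * (T + S - t)) ≤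
        Real.exp ((∑ i, ∑ j, A i j) * S) :=
      Real.exp_le_exp.2 (mul_le_mul_of_nonneg_left (by linarith [ht.1]) hC)
    have h3 : Real.exp ((∑ i, ∑ j, A i j) * (T + S - t)) *
        (d + η - ∑ j, A i j * (x (T + S) j - x (T + S) i)) ≤
        Real.exp ((∑ i, ∑ j, A i j) * S) * η :=
      (mul_le_mul_of_nonneg_left (by linarith) (Real.exp_pos _).le).trans
        (mul_le_mul_of_nonneg_right h2 hη)
    linarith
  have hd (t : ℝ) := (hx i t).sub ((hasDerivAt_id t).mul_const (d / 2))
  have hmono : MonotoneOn (fun t => x t i - t * (d / 2)) (Set.Icc T (T + S)) := by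
    refine monotoneOn_of_hasDerivWithinAt_nonneg (convex_Icc _ _)
      (fun t _ => (hd t).continuousAt.continuousWithinAt)
      (fun t _ => (hd t).hasDerivWithinAt) fun t ht => ?_
    linarith [hv t (interior_subset ht)]
  have hTS : T ≤ T + S := by linarith
  have h := hmono (Set.left_mem_Icc.2 hTS) (Set.right_mem_Icc.2 hTS) hTS
  simp only at h
  linarith

/-- Velocities become arbitrarily small. -/
lemma exists_norm_velocity_lt (hA : ∀ i j, 0 ≤ A i j) (hx : IsConsensusFlow A x) {ε : ℝ}
    (hε : 0 < ε) : ∃ t, 0 ≤ t ∧ ‖fun i => ∑ j, A i j * (x t j - x t i)‖ < ε := by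
  by_contra! hcon
  set u : ℝ → V → ℝ := fun t i => ∑ j, A i j * (x t j - x t i) with hu
  have hanti : Antitone fun t => ‖u t‖ := hx.velocity.antitone_norm hA
  set d : ℝ := sInf ((fun t => ‖u t‖) '' Set.Ici 0)
  have hne : ((fun t => ‖u t‖) '' Set.Ici 0).Nonempty := ⟨_, 0, Set.self_mem_Ici, rfl⟩
  have hbdd : BddBelow ((fun t => ‖u t‖) '' Set.Ici 0) :=
    ⟨0, by rintro _ ⟨t, -, rfl⟩; exact norm_nonneg _⟩
  have hd : 0 < d := hε.trans_le (le_csInf hne (by rintro _ ⟨t, ht, rfl⟩; exact hcon t ht))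
  set M : ℝ := ‖x 0‖
  have hM : 0 ≤ M := norm_nonneg _
  have hxM {t : ℝ} (ht : 0 ≤ t) (i : V) : |x t i| ≤ M :=
    (norm_le_pi_norm (x t) i).trans (hx.antitone_norm hA ht)
  set S : ℝ := (4 * M + 2) / d with hSdef
  have hS : 0 ≤ S := by positivity
  have hSd : S * (d / 2) = 2 * M + 1 := by rw [hSdef]; field_simp; ring
  set e : ℝ := Real.exp ((∑ i, ∑ j, A i j) * S)
  have he : 0 < e := Real.exp_pos _
  set η : ℝ := d / 2 / e with hηdef
  have hη : 0 < η := by positivity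
  have hηd : e * η ≤ d / 2 := by rw [hηdef]; field_simp; exact le_rfl
  obtain ⟨_, ⟨T, hT, rfl⟩, hTd⟩ := exists_lt_of_csInf_lt hne (lt_add_of_pos_right d hη)
  have hT0 : 0 ≤ T := hT
  have hTS : 0 ≤ T + S := by positivity
  have hupper : ∀ t ∈ Set.Icc T (T + S), ∀ i, |u t i| ≤ d + η := fun t ht i =>
    (norm_le_pi_norm (u t) i).trans ((hanti ht.1).trans hTd.le)
  obtain ⟨i, hi⟩ : ∃ i, d ≤ |u (T + S) i| := by
    by_contra! hlt
    exact absurd ((pi_norm_lt_iff hd).2 hlt) (not_lt.2 (csInf_le hbdd ⟨T + S, hTS, rfl⟩))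
  have hneg (t : ℝ) (i : V) : ∑ j, A i j * (-x t j - -x t i) = -u t i := by
    rw [hu, ← Finset.sum_neg_distrib]
    exact Finset.sum_congr rfl fun j _ => by ring
  have b1 := abs_le.1 (hxM hT0 i)
  have b2 := abs_le.1 (hxM hTS i)
  rcases le_abs.1 hi with hi | hi
  · have := hx.mul_half_le_sub hA hS hη.le hηd
      (fun t ht i => (le_abs_self _).trans (hupper t ht i)) hi
    linarith
  · have := hx.neg.mul_half_le_sub hA hS hη.le hηd
      (fun t ht i => (hneg t i).trans_le ((neg_le_abs _).trans (hupper t ht i)))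
      (hi.trans_eq (hneg _ i).symm)
    linarith

/-- Every trajectory has an equilibrium among its cluster points. -/
lemma exists_equilibrium (hA : ∀ i j, 0 ≤ A i j) (hx : IsConsensusFlow A x) :
    ∃ c : V → ℝ, (∀ i, ∑ j, A i j * (c j - c i) = 0) ∧ ∀ ε > 0, ∃ t, ‖x t - c‖ < ε := by
  choose τ hτ hv using fun n : ℕ => hx.exists_norm_velocity_lt hA (Nat.one_div_pos_of_nat (n := n))
  have hmem (n : ℕ) : x (τ n) ∈ Metric.closedBall (0 : V → ℝ) ‖x 0‖ :=
    mem_closedBall_zero_iff.2 (hx.antitone_norm hA (hτ n))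
  obtain ⟨c, -, φ, hφ, hlim⟩ := (isCompact_closedBall (0 : V → ℝ) ‖x 0‖).tendsto_subseq hmem
  refine ⟨c, ?_, fun ε hε => ?_⟩
  · have hcont : Continuous fun (y : V → ℝ) (i : V) => ∑ j, A i j * (y j - y i) := by fun_prop
    have h1 := (hcont.tendsto c).comp hlim
    have h2 : Tendsto (fun n => fun i => ∑ j, A i j * (x (τ n) j - x (τ n) i)) atTop
        (𝓝 (0 : V → ℝ)) :=
      squeeze_zero_norm (fun n => (hv n).le) tendsto_one_div_add_atTop_nhds_zero_nat
    exact congrFun (tendsto_nhds_unique h1 (h2.comp hφ.tendsto_atTop))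
  · obtain ⟨n, hn⟩ := (hlim.eventually (Metric.ball_mem_nhds c hε)).exists
    exact ⟨τ (φ n), mem_ball_iff_norm.1 hn⟩

end IsConsensusFlow

/-- Under the dynamics `ẋᵢ = Σⱼ aᵢⱼ (xⱼ - xᵢ)` over any weighted directed graph
with nonnegative weights (positive exactly on edges), every solution (every
initial condition) converges to a finite limit as `t → ∞`. -/
theorem stmt19 {V : Type*} [Fintype V] (A : Matrix V V ℝ)
    (hA : ∀ i j, 0 ≤ A i j)
    (x : ℝ → V → ℝ)
    (hx : ∀ (i : V) (t : ℝ),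
      HasDerivAt (fun s => x s i) (∑ j, A i j * (x t j - x t i)) t) :
    ∃ c : V → ℝ, ∀ i : V, Tendsto (fun t => x t i) atTop (𝓝 (c i)) := by
  have hflow : IsConsensusFlow A x := hx
  obtain ⟨c, hc, happrox⟩ := hflow.exists_equilibrium hA
  refine ⟨c, tendsto_pi_nhds.1 (Metric.tendsto_atTop.2 fun ε hε => ?_)⟩
  obtain ⟨T, hT⟩ := happrox ε hε
  refine ⟨T, fun t ht => ?_⟩
  rw [dist_eq_norm]
  exact ((hflow.sub_equilibrium hc).antitone_norm hA ht).trans_lt hT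
end
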